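/- Suppose the frequency vector ω⃗ satisfies the Strong Diophantine Condition with constants B₀ ∈ (0,1] and μ̂ > 0, and set μ := μ̂ + d + 1. Then there exists a constant C = C(d,l,μ̂,B₀) ≥ 1 such that the following holds for all ρ > 0, L ≥ 1, L̃ ≥ 1, and ξ ∈ ℝ^d with | ‖ξ‖² − ρ² | ≤ L. If ρ² > L + (C·L·L̃^{lμ})², then: (i) s := Rank Υ^ℤ_{L,L̃}(ξ) < d; (ii) the Euclidean diameter of Υ_{L,L̃}(ξ) := {ξ + mω⃗ : m ∈ Υ^ℤ_{L,L̃}(ξ)} is at most C·L·L̃^{sμ}; and (iii) the cardinality of Υ^ℤ_{L,L̃}(ξ) is at most C·L^{s}·L̃^{(s²+1)μ}. -/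

import Mathlib

open MeasureTheory Set Metric

noncomputable section

/-- `nω⃗ := ∑_j n_j ω_j ∈ ℝ^d`. -/
def intComb {d l : ℕ} (ω : Fin l → EuclideanSpace ℝ (Fin d)) (n : Fin l → ℤ) :
    EuclideanSpace ℝ (Fin d) :=
  ∑ j, (n j : ℝ) • ω j

/-- `|n| := max_j |n_j|`, as a real number. -/
def supAbs {l : ℕ} (n : Fin l → ℤ) : ℝ :=
  ((Finset.univ.sup fun j => (n j).natAbs : ℕ) : ℝ)

/-- An integer vector viewed as a vector of `ℝ^l`. -/
def intCast {l : ℕ} (m : Fin l → ℤ) : Fin l → ℝ := fun j => (m j : ℝ)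

def thetaDet {d l : ℕ} (ω : Fin l → EuclideanSpace ℝ (Fin d))
    (N : Matrix (Fin d) (Fin l) ℤ) : ℝ :=
  Matrix.det (Matrix.of fun i j : Fin d => ∑ k, (N j k : ℝ) * ω k i)

def starNorm {d l : ℕ} (N : Matrix (Fin d) (Fin l) ℤ) : ℝ :=
  ((∑ j, ∑ k, (N j k).natAbs : ℕ) : ℝ)

/-- The Strong Diophantine Condition with constants `B₀ > 0` and exponent `μhat`. -/
def SDC (d l : ℕ) (ω : Fin l → EuclideanSpace ℝ (Fin d)) (B₀ μhat : ℝ) : Prop :=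
  ∀ N : Matrix (Fin d) (Fin l) ℤ, (N.map fun z => (z : ℝ)).rank = d →
    B₀ * starNorm N ^ (-μhat) < |thetaDet ω N|

/-- The resonant set `ℛ(L,ξ) = {m ∈ ℤ^l : | ‖ξ + mω⃗‖² − ρ² | ≤ L}`. -/
def Res {d l : ℕ} (ω : Fin l → EuclideanSpace ℝ (Fin d)) (ρ L : ℝ)
    (ξ : EuclideanSpace ℝ (Fin d)) : Set (Fin l → ℤ) :=
  {m | |‖ξ + intComb ω m‖ ^ 2 - ρ ^ 2| ≤ L}

/-- `Υ^ℤ_{L,L̃}(ξ)`: integer vectors `(L,L̃)`-conjugate to `0` with respect to `ξ`,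
i.e. joined to `0` by a finite chain of consecutively `(L,L̃)`-coupled vectors. -/
def Ups {d l : ℕ} (ω : Fin l → EuclideanSpace ℝ (Fin d)) (ρ L Ltilde : ℝ)
    (ξ : EuclideanSpace ℝ (Fin d)) : Set (Fin l → ℤ) :=
  {m' | ∃ (k : ℕ) (c : ℕ → (Fin l → ℤ)),
    c 0 = 0 ∧ c k = m' ∧
    (∀ i ≤ k, c i ∈ Res ω ρ L ξ) ∧
    (∀ i < k, supAbs (c (i + 1) - c i) < Ltilde)}

/-!
By Cramer's rule and Hadamard's inequality, the Strong Diophantine Condition bounds the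
coefficients of a combination of short independent integer vectors by the length of its image in
`ℝ^d`. Since both ends of a coupling `(x, y)` are resonant, `ξ + xω⃗` is nearly orthogonal to
`(y - x)ω⃗`. The diameter of a chain with steps in a subspace `V` is bounded by induction on
`dim V`. If the steps in `V` nearly orthogonal to one endpoint span a proper subspace, the chain
never leaves it: as long as it stays inside, the induction hypothesis keeps it near that endpoint,
so its next step is again nearly orthogonal to the endpoint. Otherwise both endpoints are nearly
orthogonal to all of `V`, hence so is their difference, which lies in the image of `V` and is
therefore short.

If a cluster had rank at least `d`, then `ξ` would be nearly orthogonal to `d` independent vectors,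
hence small, against the assumption on `ρ`. The points of a cluster of rank `s` have well separated
coordinates with respect to `s` short steps, so they are counted by packing boxes into a ball, the
volume of a box being bounded below by the Strong Diophantine Condition once more.
-/

lemma abs_det_le_prod_norm {E : Type*} [NormedAddCommGroup E] [InnerProductSpace ℝ E] {n : ℕ}
    (b : OrthonormalBasis (Fin n) ℝ E) (v : Fin n → E) : |b.toBasis.det v| ≤ ∏ i, ‖v i‖ := by
  have : Fact (Module.finrank ℝ E = n) := ⟨by simpa using Module.finrank_eq_card_basis b.toBasis⟩
  rw [← b.toBasis.orientation.volumeForm_robust b rfl]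
  exact b.toBasis.orientation.abs_volumeForm_apply_le v

lemma alternatingMap_update_sum_smul {R M N ι : Type*} [CommRing R] [AddCommGroup M] [Module R M]
    [AddCommGroup N] [Module R N] [Fintype ι] [DecidableEq ι] (f : M [⋀^ι]→ₗ[R] N)
    (v : ι → M) (c : ι → R) (j : ι) :
    f (Function.update v j (∑ i, c i • v i)) = c j • f v := by
  rw [f.map_update_sum, Finset.sum_eq_single j]
  · rw [f.map_update_smul, Function.update_eq_self]
  · intro i _ hij
    rw [f.map_update_smul, f.map_update_self v hij.symm, smul_zero]
  · simp

lemma abs_coeff_mul_abs_det_le {E : Type*} [NormedAddCommGroup E] [InnerProductSpace ℝ E] {n : ℕ}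
    (b : OrthonormalBasis (Fin n) ℝ E) {v : Fin n → E} {δ : ℝ} (hv : ∀ i, ‖v i‖ ≤ δ)
    (c : Fin n → ℝ) (j : Fin n) :
    |c j| * |b.toBasis.det v| ≤ δ ^ (n - 1) * ‖∑ i, c i • v i‖ := by
  calc |c j| * |b.toBasis.det v|
      = |b.toBasis.det (Function.update v j (∑ i, c i • v i))| := by
        rw [alternatingMap_update_sum_smul, smul_eq_mul, abs_mul]
    _ ≤ ∏ i, ‖Function.update v j (∑ i, c i • v i) i‖ := abs_det_le_prod_norm b _
    _ = (∏ i ∈ Finset.univ.erase j, ‖v i‖) * ‖∑ i, c i • v i‖ := by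
        rw [← Finset.prod_erase_mul _ _ (Finset.mem_univ j), Function.update_self]
        congr 1
        exact Finset.prod_congr rfl fun i hi ↦ by
          rw [Function.update_of_ne (Finset.ne_of_mem_erase hi)]
    _ ≤ δ ^ (n - 1) * ‖∑ i, c i • v i‖ := by
        gcongr
        calc ∏ i ∈ Finset.univ.erase j, ‖v i‖ ≤ ∏ _i ∈ Finset.univ.erase j, δ := by
              gcongr with i
              exact hv i
          _ = δ ^ (n - 1) := by simp

lemma exists_linearIndependent_append {K V : Type*} [DivisionRing K] [AddCommGroup V] [Module K V]
    {t : ℕ} {v : Fin t → V} (hv : LinearIndependent K v) {S : Set V}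
    (hS : Submodule.span K S = ⊤) (e : ℕ) (he : t + e ≤ Module.finrank K V) :
    ∃ w : Fin e → V, (∀ j, w j ∈ S) ∧ LinearIndependent K (Fin.append v w) := by
  induction e with
  | zero => exact ⟨Fin.elim0, fun j ↦ j.elim0, by simpa using hv⟩
  | succ e ih =>
    obtain ⟨w, hwS, hw⟩ := ih (by lia)
    obtain ⟨x, hxS, hx⟩ : ∃ x ∈ S, x ∉ Submodule.span K (range (Fin.append v w)) := by
      by_contra! hall
      have hspan : Submodule.span K (range (Fin.append v w)) = ⊤ :=
        top_le_iff.1 (hS ▸ Submodule.span_le.2 hall)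
      have hcard := finrank_span_eq_card hw
      rw [hspan, finrank_top, Fintype.card_fin] at hcard
      lia
    refine ⟨Fin.snoc w x, Fin.lastCases (by simpa) (by simpa), ?_⟩
    rw [Fin.append_snoc]
    exact linearIndependent_finSnoc.2 ⟨hw, hx⟩

lemma exists_coords_of_linearIndependent {K V ι : Type*} [Field K] [AddCommGroup V] [Module K V]
    [Fintype ι] {v : ι → V} (hv : LinearIndependent K v) :
    ∃ c : V →ₗ[K] ι → K, ∀ x ∈ Submodule.span K (range v), ∑ j, c x j • v j = x := by
  obtain ⟨c, hc⟩ := (Fintype.linearCombination K v).exists_leftInverse_of_injective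
    (LinearMap.ker_eq_bot.2 (hv.fintypeLinearCombination_injective))
  refine ⟨c, fun x hx ↦ ?_⟩
  obtain ⟨a, rfl⟩ := (Submodule.mem_span_range_iff_exists_fun K).1 hx
  have hca : c (∑ j, a j • v j) = a := LinearMap.congr_fun hc a
  rw [hca]

lemma abs_inner_sum_smul_le {E ι : Type*} [NormedAddCommGroup E] [InnerProductSpace ℝ E]
    [Fintype ι] {x : E} {v : ι → E} {A : ℝ} (hA : ∀ j, |inner ℝ x (v j)| ≤ A) (c : ι → ℝ) :
    |inner ℝ x (∑ j, c j • v j)| ≤ (∑ j, |c j|) * A := by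
  rw [inner_sum, Finset.sum_mul]
  refine (Finset.abs_sum_le_sum_abs _ _).trans (Finset.sum_le_sum fun j _ ↦ ?_)
  rw [real_inner_smul_right, abs_mul]
  exact mul_le_mul_of_nonneg_left (hA j) (abs_nonneg _)

lemma norm_sum_smul_le {E ι : Type*} [SeminormedAddCommGroup E] [NormedSpace ℝ E] [Fintype ι]
    {v : ι → E} {c : ι → ℝ} {r δ : ℝ} (hr : 0 ≤ r) (hc : ∀ j, |c j| ≤ r) (hv : ∀ j, ‖v j‖ ≤ δ) :
    ‖∑ j, c j • v j‖ ≤ Fintype.card ι * (r * δ) := by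
  calc ‖∑ j, c j • v j‖ ≤ ∑ j, ‖c j • v j‖ := norm_sum_le _ _
    _ ≤ ∑ _j : ι, r * δ := Finset.sum_le_sum fun j _ ↦ by
        rw [norm_smul]
        exact mul_le_mul (hc j) (hv j) (norm_nonneg _) hr
    _ = Fintype.card ι * (r * δ) := by simp

lemma norm_sum_smul_le_of_mem_pi_Ico {E ι : Type*} [SeminormedAddCommGroup E] [NormedSpace ℝ E]
    [Fintype ι] {v : ι → E} {a r x : ι → ℝ} {D M : ℝ} (ha : ‖∑ i, a i • v i‖ ≤ D)
    (hr : ∀ i, r i * ‖v i‖ ≤ M) (hx : x ∈ univ.pi fun i ↦ Ico (a i) (a i + r i)) :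
    ‖∑ i, x i • v i‖ ≤ D + Fintype.card ι * M := by
  have hterm (i) : ‖(x i - a i) • v i‖ ≤ M := by
    have ⟨hlow, hup⟩ : x i ∈ Ico (a i) (a i + r i) := hx i trivial
    rw [norm_smul, Real.norm_of_nonneg (sub_nonneg.2 hlow)]
    exact (mul_le_mul_of_nonneg_right (by linarith) (norm_nonneg _)).trans (hr i)
  calc ‖∑ i, x i • v i‖ = ‖∑ i, a i • v i + ∑ i, (x i - a i) • v i‖ := by
        simp only [sub_smul, Finset.sum_sub_distrib, add_sub_cancel]
    _ ≤ ‖∑ i, a i • v i‖ + ‖∑ i, (x i - a i) • v i‖ := norm_add_le _ _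
    _ ≤ D + Fintype.card ι * M := by
        gcongr
        exact (norm_sum_le_of_le _ fun i _ ↦ hterm i).trans_eq (by simp)

lemma pairwiseDisjoint_pi_Ico {α ι : Type*} {r : ι → ℝ} {T : Set α} {a : α → ι → ℝ}
    (hT : T.Pairwise fun p q ↦ ∃ i, r i ≤ |a p i - a q i|) :
    T.PairwiseDisjoint fun p ↦ univ.pi fun i ↦ Ico (a p i) (a p i + r i) := by
  intro p hp q hq hpq
  obtain ⟨i, hi⟩ := hT hp hq hpq
  refine Set.disjoint_left.2 fun x hxp hxq ↦ hi.not_gt ?_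
  have ⟨hpx, hxp⟩ : x i ∈ Ico (a p i) (a p i + r i) := hxp i trivial
  have ⟨hqx, hxq⟩ : x i ∈ Ico (a q i) (a q i + r i) := hxq i trivial
  exact abs_lt.2 ⟨by linarith, by linarith⟩

lemma card_mul_prod_mul_abs_det_le {α ι : Type*} [Fintype ι] (f : (ι → ℝ) →ₗ[ℝ] ι → ℝ)
    {r : ι → ℝ} (hr : ∀ i, 0 ≤ r i) {Q : ℝ} (hQ : 0 ≤ Q) {T : Finset α} {a : α → ι → ℝ}
    (hT : (T : Set α).Pairwise fun p q ↦ ∃ i, r i ≤ |a p i - a q i|)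
    (hf : ∀ p ∈ T, ∀ x ∈ univ.pi fun i ↦ Ico (a p i) (a p i + r i), ‖f x‖ ≤ Q) :
    T.card * (∏ i, r i) * |LinearMap.det f| ≤ (2 * Q) ^ Fintype.card ι := by
  set box : α → Set (ι → ℝ) := fun p ↦ univ.pi fun i ↦ Ico (a p i) (a p i + r i)
  have volume_boxes : volume (⋃ p ∈ T, box p) = ENNReal.ofReal (T.card * ∏ i, r i) := by
    have volume_box (p) : volume (box p) = ENNReal.ofReal (∏ i, r i) := by
      simp [box, volume_pi_pi, ENNReal.ofReal_prod_of_nonneg fun i _ ↦ hr i]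
    have disjoint_boxes : (T : Set α).PairwiseDisjoint box := pairwiseDisjoint_pi_Ico hT
    rw [measure_biUnion_finset disjoint_boxes
      fun _ _ ↦ MeasurableSet.univ_pi fun _ ↦ measurableSet_Ico]
    simp [volume_box, ENNReal.ofReal_mul]
  have image_subset : f '' (⋃ p ∈ T, box p) ⊆ closedBall 0 Q := by
    rintro _ ⟨x, hx, rfl⟩
    obtain ⟨p, hp, hxp⟩ := mem_iUnion₂.1 hx
    exact mem_closedBall_zero_iff.2 (hf p hp x hxp)
  have hvol := measure_mono (μ := volume) image_subset
  rw [Measure.addHaar_image_linearMap, volume_boxes, Real.volume_pi_closedBall _ hQ,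
    ← ENNReal.ofReal_mul (abs_nonneg _), ENNReal.ofReal_le_ofReal_iff (by positivity)] at hvol
  linarith

lemma card_mul_prod_mul_abs_basisDet_le {α ι : Type*} [Fintype ι] [DecidableEq ι]
    (v : ι → EuclideanSpace ℝ ι) {r : ι → ℝ} (hr : ∀ i, 0 ≤ r i) {Q : ℝ} (hQ : 0 ≤ Q)
    {T : Finset α} {a : α → ι → ℝ}
    (hT : (T : Set α).Pairwise fun p q ↦ ∃ i, r i ≤ |a p i - a q i|)
    (hv : ∀ p ∈ T, ∀ x ∈ univ.pi fun i ↦ Ico (a p i) (a p i + r i), ‖∑ i, x i • v i‖ ≤ Q) :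
    T.card * (∏ i, r i) * |(EuclideanSpace.basisFun ι ℝ).toBasis.det v| ≤
      (2 * Q) ^ Fintype.card ι := by
  set b := (EuclideanSpace.basisFun ι ℝ).toBasis
  rw [Module.Basis.det_apply, ← LinearMap.det_toLin']
  refine card_mul_prod_mul_abs_det_le _ hr hQ hT fun p hp x hx ↦ ?_
  have happly : Matrix.toLin' (b.toMatrix v) x = WithLp.ofLp (∑ i, x i • v i) := by
    ext k
    simp [b, Matrix.mulVec, dotProduct, Module.Basis.toMatrix_apply, mul_comm]
  rw [happly]
  exact (pi_norm_le_iff_of_nonneg hQ).2 fun k ↦ (PiLp.norm_apply_le _ k).trans (hv p hp x hx)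

lemma finite_and_ncard_le_of_forall_finset_card_le {α : Type*} {S : Set α} {M : ℝ}
    (h : ∀ T : Finset α, (T : Set α) ⊆ S → T.card ≤ M) : S.Finite ∧ S.ncard ≤ M := by
  have hfin : S.Finite := by
    by_contra hinf
    obtain ⟨T, hTS, hT⟩ := Set.Infinite.exists_subset_card_eq hinf (⌊M⌋₊ + 1)
    have := h T hTS
    rw [hT] at this
    exact (Nat.lt_floor_add_one M).not_ge (mod_cast this)
  refine ⟨hfin, ?_⟩
  rw [Set.ncard_eq_toFinset_card S hfin]
  exact h _ (by simp)

section IntegerVectors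

variable {d l : ℕ} {ω : Fin l → EuclideanSpace ℝ (Fin d)}

/-- The real-linear extension `x ↦ ∑ j, x j • ω j` of `intComb ω` from `ℤ^l` to `ℝ^l`. -/
def realComb (ω : Fin l → EuclideanSpace ℝ (Fin d)) :
    (Fin l → ℝ) →ₗ[ℝ] EuclideanSpace ℝ (Fin d) :=
  Fintype.linearCombination ℝ ω

lemma realComb_intCast (ω : Fin l → EuclideanSpace ℝ (Fin d)) (n : Fin l → ℤ) :
    realComb ω (intCast n) = intComb ω n := by
  simp [realComb, intComb, intCast, Fintype.linearCombination_apply]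

lemma intCast_zero : intCast (0 : Fin l → ℤ) = 0 := by
  ext j; simp [intCast]

lemma intCast_add (m n : Fin l → ℤ) : intCast (m + n) = intCast m + intCast n := by
  ext j; simp [intCast]

lemma intCast_sub (m n : Fin l → ℤ) : intCast (m - n) = intCast m - intCast n := by
  ext j; simp [intCast]

lemma intComb_zero (ω : Fin l → EuclideanSpace ℝ (Fin d)) : intComb ω 0 = 0 := by
  simp [intComb]

lemma intComb_sub (ω : Fin l → EuclideanSpace ℝ (Fin d)) (m n : Fin l → ℤ) :
    intComb ω (m - n) = intComb ω m - intComb ω n := by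
  simp only [← realComb_intCast, intCast_sub, map_sub]

lemma abs_le_supAbs (n : Fin l → ℤ) (k : Fin l) : |(n k : ℝ)| ≤ supAbs n := by
  rw [← Int.cast_abs, ← Nat.cast_natAbs, supAbs, Nat.cast_le]
  exact Finset.le_sup (f := fun j ↦ (n j).natAbs) (Finset.mem_univ k)

lemma supAbs_nonneg (n : Fin l → ℤ) : 0 ≤ supAbs n := Nat.cast_nonneg _

lemma supAbs_sub_comm (m n : Fin l → ℤ) : supAbs (m - n) = supAbs (n - m) := by
  rw [← neg_sub]
  simp only [supAbs, Pi.neg_apply, Int.natAbs_neg]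

lemma supAbs_single_one_le (k : Fin l) : supAbs (Pi.single k 1 : Fin l → ℤ) ≤ 1 := by
  rw [supAbs, Nat.cast_le_one, Finset.sup_le_iff]
  intro j _
  by_cases hjk : j = k <;> simp [hjk]

lemma eq_of_forall_abs_sub_lt_one {m n : Fin l → ℤ} (h : ∀ k, |intCast m k - intCast n k| < 1) :
    m = n := by
  ext k
  have hk : |((m k - n k : ℤ) : ℝ)| < 1 := by simpa [intCast] using h k
  rw [← Int.cast_abs, ← Int.cast_one, Int.cast_lt, Int.abs_lt_one_iff] at hk
  exact sub_eq_zero.1 hk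

lemma norm_le_of_forall_mem_Icc {x : EuclideanSpace ℝ (Fin d)}
    (hx : ∀ i, x i ∈ Icc (-(1 : ℝ) / 2) (1 / 2)) : ‖x‖ ≤ d := by
  have hcoord (i) : ‖x i‖ ^ 2 ≤ 1 := by
    have ⟨hlow, hup⟩ := hx i
    rw [sq_le_one_iff_abs_le_one, abs_norm, Real.norm_eq_abs, abs_le]
    constructor <;> linarith
  rw [EuclideanSpace.norm_eq, Real.sqrt_le_left (Nat.cast_nonneg d)]
  calc ∑ i, ‖x i‖ ^ 2 ≤ ∑ _i : Fin d, (1 : ℝ) := Finset.sum_le_sum fun i _ ↦ hcoord i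
    _ = (d : ℝ) := by simp
    _ ≤ (d : ℝ) ^ 2 := mod_cast Nat.le_self_pow two_ne_zero d

lemma norm_intComb_le (hω : ∀ j, ‖ω j‖ ≤ d) {n : Fin l → ℤ} {R : ℝ} (hn : supAbs n ≤ R) :
    ‖intComb ω n‖ ≤ l * d * R := by
  have hR := (supAbs_nonneg n).trans hn
  calc ‖intComb ω n‖ ≤ Fintype.card (Fin l) * (R * d) :=
        norm_sum_smul_le hR (fun j ↦ (abs_le_supAbs n j).trans hn) hω
    _ = l * d * R := by rw [Fintype.card_fin]; ring

lemma exists_basis_of_span_intCast_image_eq {S : Set (Fin l → ℤ)} {V : Submodule ℝ (Fin l → ℝ)}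
    (hV : Submodule.span ℝ (intCast '' S) = V) :
    ∃ n : Fin (Module.finrank ℝ V) → Fin l → ℤ, (∀ j, n j ∈ S) ∧
      (LinearIndependent ℝ fun j ↦ intCast (n j)) ∧
      Submodule.span ℝ (range fun j ↦ intCast (n j)) = V := by
  subst hV
  obtain ⟨f, hf, hspan, hind⟩ := Submodule.exists_fun_fin_finrank_span_eq ℝ (intCast '' S)
  choose n hn hnf using hf
  obtain rfl : (fun j ↦ intCast (n j)) = f := funext hnf
  exact ⟨n, hn, hind, hspan⟩

lemma exists_linearIndependent_append_short {t e : ℕ} {n : Fin t → Fin l → ℤ}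
    (hn : LinearIndependent ℝ fun j ↦ intCast (n j)) (hl : t + e ≤ l) :
    ∃ w : Fin e → Fin l → ℤ, (∀ j, supAbs (w j) ≤ 1) ∧
      LinearIndependent ℝ fun j ↦ intCast (Fin.append n w j) := by
  have hspan : Submodule.span ℝ (intCast '' {w : Fin l → ℤ | supAbs w ≤ 1}) = ⊤ := by
    rw [eq_top_iff, ← (Pi.basisFun ℝ (Fin l)).span_eq, Submodule.span_le]
    rintro _ ⟨k, rfl⟩
    refine Submodule.subset_span ⟨Pi.single k 1, supAbs_single_one_le k, ?_⟩
    ext j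
    simp [intCast, Pi.single_apply]
  obtain ⟨f, hf, hind⟩ := exists_linearIndependent_append hn hspan e (by simpa using hl)
  choose w hw hwf using hf
  refine ⟨w, hw, ?_⟩
  have happend : (fun j ↦ intCast (Fin.append n w j)) = Fin.append (fun j ↦ intCast (n j)) f := by
    ext1 j
    refine Fin.addCases (fun i ↦ ?_) (fun i ↦ ?_) j <;> simp [hwf]
  rwa [happend]

end IntegerVectors

section StrongDiophantine

variable {d l : ℕ} {ω : Fin l → EuclideanSpace ℝ (Fin d)} {B₀ μhat R : ℝ}

lemma thetaDet_eq_det (ω : Fin l → EuclideanSpace ℝ (Fin d)) (N : Matrix (Fin d) (Fin l) ℤ) :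
    thetaDet ω N = (EuclideanSpace.basisFun (Fin d) ℝ).toBasis.det fun j ↦ intComb ω (N j) := by
  rw [thetaDet, Module.Basis.det_apply]
  congr 1
  ext i j
  simp [intComb, Module.Basis.toMatrix_apply]

lemma starNorm_le {N : Matrix (Fin d) (Fin l) ℤ} (hN : ∀ j, supAbs (N j) ≤ R) :
    starNorm N ≤ l * d * R := by
  calc starNorm N = ∑ j, ∑ k, |(N j k : ℝ)| := by simp [starNorm, Nat.cast_natAbs]
    _ ≤ ∑ _j : Fin d, ∑ _k : Fin l, R := by
        gcongr with j _ k
        exact (abs_le_supAbs (N j) k).trans (hN j)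
    _ = l * d * R := by simp; ring

lemma starNorm_pos {N : Matrix (Fin d) (Fin l) ℤ} (hN : N ≠ 0) : 0 < starNorm N := by
  refine (Nat.cast_nonneg _).lt_of_ne' fun h ↦ hN ?_
  ext j k
  rw [Nat.cast_eq_zero, Finset.sum_eq_zero_iff] at h
  exact Int.natAbs_eq_zero.1 (Finset.sum_eq_zero_iff.1 (h j (Finset.mem_univ j)) k
    (Finset.mem_univ k))

lemma SDC.le_mul_abs_det (h : SDC d l ω B₀ μhat) (hd : 0 < d) (hμ : 0 ≤ μhat)
    {N : Fin d → Fin l → ℤ} (hN : LinearIndependent ℝ fun j ↦ intCast (N j))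
    (hR : ∀ j, supAbs (N j) ≤ R) :
    B₀ ≤ (l * d * R) ^ μhat *
      |(EuclideanSpace.basisFun (Fin d) ℝ).toBasis.det fun j ↦ intComb ω (N j)| := by
  have hrank : (Matrix.map (Matrix.of N) fun z ↦ (z : ℝ)).rank = d := by
    simpa using LinearIndependent.rank_matrix (M := (Matrix.of N).map fun z ↦ (z : ℝ)) hN
  have hpos : 0 < starNorm (Matrix.of N) := starNorm_pos fun h0 ↦ hN.ne_zero ⟨0, hd⟩ <| by
    rw [show N = 0 from h0]
    exact intCast_zero
  calc B₀ = starNorm (Matrix.of N) ^ μhat * (B₀ * starNorm (Matrix.of N) ^ (-μhat)) := by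
        rw [Real.rpow_neg hpos.le]
        field_simp
    _ ≤ starNorm (Matrix.of N) ^ μhat * |thetaDet ω (Matrix.of N)| := by
        gcongr
        exact (h _ hrank).le
    _ ≤ (l * d * R) ^ μhat * |thetaDet ω (Matrix.of N)| := by
        gcongr
        exact starNorm_le hR
    _ = _ := by rw [thetaDet_eq_det]; rfl

/-- The coefficients of a combination of at most `d` linearly independent integer vectors of
length at most `R` are controlled, in `ℓ¹`, by the length of its image in `ℝ^d`. This is the only
form in which the Strong Diophantine Condition enters the analysis of clusters up to counting. -/
def CoeffBound (ω : Fin l → EuclideanSpace ℝ (Fin d)) (R κ : ℝ) : Prop :=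
  ∀ t ≤ d, ∀ n : Fin t → Fin l → ℤ, (LinearIndependent ℝ fun j ↦ intCast (n j)) →
    (∀ j, supAbs (n j) ≤ R) → ∀ c : Fin t → ℝ,
      ∑ j, |c j| ≤ κ * ‖∑ j, c j • intComb ω (n j)‖

lemma SDC.abs_coeff_le (h : SDC d l ω B₀ μhat) (hω : ∀ j, ‖ω j‖ ≤ d) (hd : 0 < d) (hl : 0 < l)
    (hB₀ : 0 < B₀) (hμ : 0 ≤ μhat) (hR : 0 < R) {N : Fin d → Fin l → ℤ}
    (hN : LinearIndependent ℝ fun j ↦ intCast (N j)) (hNR : ∀ j, supAbs (N j) ≤ R)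
    (c : Fin d → ℝ) (j : Fin d) :
    |c j| ≤ (l * d * R) ^ (d - 1 + μhat) / B₀ * ‖∑ j, c j • intComb ω (N j)‖ := by
  have hδ : 0 < l * d * R := by positivity
  set δ := l * d * R
  set Δ := (EuclideanSpace.basisFun (Fin d) ℝ).toBasis.det fun j ↦ intComb ω (N j)
  have hcramer : |c j| * |Δ| ≤ δ ^ (d - 1) * ‖∑ j, c j • intComb ω (N j)‖ :=
    abs_coeff_mul_abs_det_le _ (fun i ↦ norm_intComb_le hω (hNR i)) c j
  have hsplit : δ ^ (d - 1 + μhat) = δ ^ μhat * δ ^ (d - 1) := by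
    rw [add_comm, Real.rpow_add hδ, ← Nat.cast_pred hd, Real.rpow_natCast]
  rw [div_mul_eq_mul_div, le_div_iff₀ hB₀]
  calc |c j| * B₀ ≤ |c j| * (δ ^ μhat * |Δ|) := by
        gcongr
        exact h.le_mul_abs_det hd hμ hN hNR
    _ = δ ^ μhat * (|c j| * |Δ|) := by ring
    _ ≤ δ ^ μhat * (δ ^ (d - 1) * ‖∑ j, c j • intComb ω (N j)‖) := by gcongr
    _ = δ ^ (d - 1 + μhat) * ‖∑ j, c j • intComb ω (N j)‖ := by rw [hsplit]; ring

lemma supAbs_append_le {t e : ℕ} {n : Fin t → Fin l → ℤ} {w : Fin e → Fin l → ℤ}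
    (hn : ∀ j, supAbs (n j) ≤ R) (hw : ∀ j, supAbs (w j) ≤ R) (j : Fin (t + e)) :
    supAbs (Fin.append n w j) ≤ R := by
  refine Fin.addCases (fun i ↦ ?_) (fun i ↦ ?_) j
  · simpa using hn i
  · simpa using hw i

/-- The constant `κ` for which the Strong Diophantine Condition yields `CoeffBound ω R κ`. -/
def coeffConst (d l : ℕ) (B₀ μhat R : ℝ) : ℝ := d * (l * d * R) ^ (d - 1 + μhat) / B₀

lemma SDC.coeffBound (h : SDC d l ω B₀ μhat) (hω : ∀ j, ‖ω j‖ ≤ d) (hd : 0 < d) (hl : d ≤ l)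
    (hB₀ : 0 < B₀) (hμ : 0 ≤ μhat) (hR : 1 ≤ R) :
    CoeffBound ω R (coeffConst d l B₀ μhat R) := by
  intro t ht n hn hnR c
  obtain ⟨e, rfl⟩ := Nat.exists_eq_add_of_le ht
  obtain ⟨w, hw, hnw⟩ := exists_linearIndependent_append_short hn hl
  have hcoeff := h.abs_coeff_le hω hd (hd.trans_le hl) hB₀ hμ (zero_lt_one.trans_le hR)
    hnw (supAbs_append_le hnR fun j ↦ (hw j).trans hR) (Fin.append c 0)
  have hsum : ∑ j, Fin.append c 0 j • intComb ω (Fin.append n w j) =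
      ∑ j, c j • intComb ω (n j) := by
    simp [Fin.sum_univ_add]
  calc ∑ j, |c j| = ∑ j : Fin (t + e), |Fin.append c 0 j| := by simp [Fin.sum_univ_add]
    _ ≤ ∑ _j : Fin (t + e), _ := Finset.sum_le_sum fun j _ ↦ hcoeff j
    _ = _ := by
        rw [hsum, Finset.sum_const, Finset.card_univ, Fintype.card_fin, nsmul_eq_mul, coeffConst]
        ring

end StrongDiophantine

section Conjugate

variable {d l : ℕ} {ω : Fin l → EuclideanSpace ℝ (Fin d)} {ρ L R : ℝ}
  {ξ : EuclideanSpace ℝ (Fin d)} {V : Submodule ℝ (Fin l → ℝ)} {m b x y : Fin l → ℤ}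

/-- `x` and `y` are `(L,R)`-coupled with respect to `ξ`, by a step `y - x` lying in `V`. -/
def CoupledIn (ω : Fin l → EuclideanSpace ℝ (Fin d)) (ρ L R : ℝ) (ξ : EuclideanSpace ℝ (Fin d))
    (V : Submodule ℝ (Fin l → ℝ)) (x y : Fin l → ℤ) : Prop :=
  x ∈ Res ω ρ L ξ ∧ y ∈ Res ω ρ L ξ ∧ supAbs (y - x) < R ∧ intCast (y - x) ∈ V

/-- `x` and `y` are joined by a chain of couplings whose steps lie in `V`. Confining the steps to
a subspace is what makes an induction on dimension possible. -/
def ConjugateIn (ω : Fin l → EuclideanSpace ℝ (Fin d)) (ρ L R : ℝ) (ξ : EuclideanSpace ℝ (Fin d))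
    (V : Submodule ℝ (Fin l → ℝ)) : (Fin l → ℤ) → (Fin l → ℤ) → Prop :=
  Relation.ReflTransGen (CoupledIn ω ρ L R ξ V)

lemma CoupledIn.symm (h : CoupledIn ω ρ L R ξ V x y) : CoupledIn ω ρ L R ξ V y x := by
  obtain ⟨hx, hy, hR, hV⟩ := h
  refine ⟨hy, hx, supAbs_sub_comm x y ▸ hR, ?_⟩
  rw [intCast_sub, ← neg_sub, ← intCast_sub]
  exact V.neg_mem hV

lemma ConjugateIn.symm (h : ConjugateIn ω ρ L R ξ V m b) : ConjugateIn ω ρ L R ξ V b m :=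
  have : Std.Symm (CoupledIn ω ρ L R ξ V) := ⟨fun _ _ ↦ CoupledIn.symm⟩
  Relation.ReflTransGen.stdSymm.symm _ _ h

lemma ConjugateIn.intCast_sub_mem (h : ConjugateIn ω ρ L R ξ V m b) : intCast (b - m) ∈ V := by
  induction h with
  | refl => simp [intCast_zero]
  | @tail x y _ hxy ih =>
    rw [← sub_add_sub_cancel y x m, intCast_add]
    exact V.add_mem hxy.2.2.2 ih

lemma ConjugateIn.mem_Res (h : ConjugateIn ω ρ L R ξ V m b) (hm : m ∈ Res ω ρ L ξ) :
    b ∈ Res ω ρ L ξ := by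
  cases h with
  | refl => exact hm
  | tail _ hb => exact hb.2.1

lemma conjugateIn_of_mem_Ups (hm : m ∈ Ups ω ρ L R ξ) :
    ConjugateIn ω ρ L R ξ (Submodule.span ℝ (intCast '' Ups ω ρ L R ξ)) 0 m := by
  obtain ⟨k, c, hc₀, rfl, hres, hstep⟩ := hm
  have hmem (i) (hi : i ≤ k) : intCast (c i) ∈ Submodule.span ℝ (intCast '' Ups ω ρ L R ξ) :=
    Submodule.subset_span ⟨c i, ⟨i, c, hc₀, rfl, fun j hj ↦ hres j (hj.trans hi),
      fun j hj ↦ hstep j (hj.trans_le hi)⟩, rfl⟩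
  have hchain (i) (hi : i ≤ k) :
      ConjugateIn ω ρ L R ξ (Submodule.span ℝ (intCast '' Ups ω ρ L R ξ)) 0 (c i) := by
    induction i with
    | zero => rw [hc₀]; exact .refl
    | succ i ih =>
      refine (ih (by lia)).tail ⟨hres i (by lia), hres (i + 1) hi, hstep i (by lia), ?_⟩
      rw [intCast_sub]
      exact sub_mem (hmem _ hi) (hmem _ (by lia))
  exact hchain k le_rfl

lemma abs_inner_le_of_mem_Res (hx : x ∈ Res ω ρ L ξ) (hy : y ∈ Res ω ρ L ξ) :
    |inner ℝ (ξ + intComb ω x) (intComb ω (y - x))| ≤ L + ‖intComb ω (y - x)‖ ^ 2 / 2 := by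
  have hnorm := norm_add_sq_real (ξ + intComb ω x) (intComb ω (y - x))
  have hsum : ξ + intComb ω x + intComb ω (y - x) = ξ + intComb ω y := by
    rw [intComb_sub]
    abel
  rw [hsum] at hnorm
  have ⟨hx₁, hx₂⟩ := abs_le.1 (show |_| ≤ L from hx)
  have ⟨hy₁, hy₂⟩ := abs_le.1 (show |_| ≤ L from hy)
  have := sq_nonneg ‖intComb ω (y - x)‖
  exact abs_le.2 ⟨by linarith, by linarith⟩

lemma lt_norm_of_mem_Res {D : ℝ} (hD : D ^ 2 < ρ ^ 2 - L) (hm : m ∈ Res ω ρ L ξ) :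
    D < ‖ξ + intComb ω m‖ := by
  have ⟨hlow, _⟩ := abs_le.1 (show |_| ≤ L from hm)
  exact lt_of_pow_lt_pow_left₀ 2 (norm_nonneg _) (by linarith)

end Conjugate

section NearlyOrthogonalSteps

variable {d l : ℕ} {ω : Fin l → EuclideanSpace ℝ (Fin d)} {R κ A : ℝ}
  {x : EuclideanSpace ℝ (Fin d)} {V : Submodule ℝ (Fin l → ℝ)}

/-- Short integer vectors in `V` whose images in `ℝ^d` are orthogonal to `x` up to an error `A`. -/
def nearlyOrthogonalSteps (ω : Fin l → EuclideanSpace ℝ (Fin d)) (R A : ℝ)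
    (V : Submodule ℝ (Fin l → ℝ)) (x : EuclideanSpace ℝ (Fin d)) : Set (Fin l → ℤ) :=
  {n | supAbs n < R ∧ intCast n ∈ V ∧ |inner ℝ x (intComb ω n)| ≤ A}

/-- The subspace of `V` spanned by the steps nearly orthogonal to `x`. -/
def nearlyOrthogonalSpan (ω : Fin l → EuclideanSpace ℝ (Fin d)) (R A : ℝ)
    (V : Submodule ℝ (Fin l → ℝ)) (x : EuclideanSpace ℝ (Fin d)) : Submodule ℝ (Fin l → ℝ) :=
  Submodule.span ℝ (intCast '' nearlyOrthogonalSteps ω R A V x)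

lemma nearlyOrthogonalSpan_le : nearlyOrthogonalSpan ω R A V x ≤ V := by
  rw [nearlyOrthogonalSpan, Submodule.span_le]
  rintro _ ⟨n, hn, rfl⟩
  exact hn.2.1

lemma abs_inner_realComb_le (hκ : CoeffBound ω R κ) (hA : 0 ≤ A)
    (hV : nearlyOrthogonalSpan ω R A V x = V) (hd : Module.finrank ℝ V ≤ d) {u : Fin l → ℝ}
    (hu : u ∈ V) : |inner ℝ x (realComb ω u)| ≤ κ * A * ‖realComb ω u‖ := by
  obtain ⟨n, hn, hind, hspan⟩ := exists_basis_of_span_intCast_image_eq hV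
  obtain ⟨c, rfl⟩ := (Submodule.mem_span_range_iff_exists_fun ℝ).1 (hspan ▸ hu)
  simp only [map_sum, map_smul, realComb_intCast]
  calc |inner ℝ x (∑ j, c j • intComb ω (n j))| ≤ (∑ j, |c j|) * A :=
        abs_inner_sum_smul_le (fun j ↦ (hn j).2.2) c
    _ ≤ κ * ‖∑ j, c j • intComb ω (n j)‖ * A := by
        gcongr
        exact hκ _ hd n hind (fun j ↦ (hn j).1.le) c
    _ = κ * A * ‖∑ j, c j • intComb ω (n j)‖ := by ring

lemma CoeffBound.linearIndependent_intComb (hκ : CoeffBound ω R κ) {t : ℕ} (ht : t ≤ d)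
    {n : Fin t → Fin l → ℤ} (hn : LinearIndependent ℝ fun j ↦ intCast (n j))
    (hR : ∀ j, supAbs (n j) ≤ R) : LinearIndependent ℝ fun j ↦ intComb ω (n j) := by
  rw [Fintype.linearIndependent_iff]
  intro c hc i
  have hsum := hκ t ht n hn hR c
  rw [hc, norm_zero, mul_zero] at hsum
  exact abs_nonpos_iff.1
    ((Finset.single_le_sum (fun j _ ↦ abs_nonneg (c j)) (Finset.mem_univ i)).trans hsum)

lemma finrank_lt_of_nearlyOrthogonalSpan_eq (hκ : CoeffBound ω R κ) (hκ₀ : 0 ≤ κ) (hA : 0 ≤ A)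
    (hκA : κ * A < ‖x‖) (hV : nearlyOrthogonalSpan ω R A V x = V) : Module.finrank ℝ V < d := by
  by_contra! hd
  obtain ⟨n, hn, hind, -⟩ := exists_basis_of_span_intCast_image_eq hV
  set v : Fin d → Fin l → ℤ := fun j ↦ n (Fin.castLE hd j)
  have hv : LinearIndependent ℝ fun j ↦ intCast (v j) := hind.comp _ (Fin.castLE_injective hd)
  have hvR (j) : supAbs (v j) ≤ R := (hn _).1.le
  have hspan : Submodule.span ℝ (range fun j ↦ intComb ω (v j)) = ⊤ :=
    (hκ.linearIndependent_intComb le_rfl hv hvR).span_eq_top_of_card_eq_finrank' (by simp)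
  obtain ⟨c, hc⟩ := (Submodule.mem_span_range_iff_exists_fun ℝ).1
    (hspan ▸ Submodule.mem_top : x ∈ _)
  have hinner : ‖x‖ * ‖x‖ ≤ κ * A * ‖x‖ := by
    calc ‖x‖ * ‖x‖ = |inner ℝ x (∑ j, c j • intComb ω (v j))| := by
          rw [hc, real_inner_self_eq_norm_mul_norm, abs_of_nonneg (by positivity)]
      _ ≤ (∑ j, |c j|) * A := abs_inner_sum_smul_le (fun j ↦ (hn _).2.2) c
      _ ≤ κ * ‖x‖ * A := by
          gcongr
          simpa only [hc] using hκ d le_rfl v hv hvR c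
      _ = κ * A * ‖x‖ := by ring
  have hx : 0 < ‖x‖ := (mul_nonneg hκ₀ hA).trans_lt hκA
  exact hκA.not_ge (le_of_mul_le_mul_right hinner hx)

end NearlyOrthogonalSteps

section Diameter

variable {d l : ℕ} {ω : Fin l → EuclideanSpace ℝ (Fin d)} {ρ L R δ κ A Δ : ℝ}
  {ξ : EuclideanSpace ℝ (Fin d)} {V : Submodule ℝ (Fin l → ℝ)} {m b : Fin l → ℤ}

/-- The bound for the diameter of a chain of couplings with steps in a `t`-dimensional subspace,
where `δ` bounds the length of the image in `ℝ^d` of a step and `κ` is as in `CoeffBound`. Each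
dimension costs a factor `5 * κ * δ ^ 2` because `2 * κ * (L + δ ^ 2 / 2 + D * δ)`, the distance of
two points nearly orthogonal to the whole subspace, is at most `5 * κ * δ ^ 2 * D` for `D ≥ L`. -/
def clusterDiam (L δ κ : ℝ) (t : ℕ) : ℝ := L * (5 * κ * δ ^ 2) ^ t

/-- The error up to which `ξ + mω⃗` is orthogonal to every step of a chain of couplings starting
at `m` with diameter at most `clusterDiam L δ κ t`. -/
def stepInnerBound (L δ κ : ℝ) (t : ℕ) : ℝ := L + δ ^ 2 / 2 + clusterDiam L δ κ t * δ

lemma le_clusterDiam (hL : 0 ≤ L) (hδ : 1 ≤ δ) (hκ : 1 ≤ κ) (t : ℕ) : L ≤ clusterDiam L δ κ t :=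
  le_mul_of_one_le_right hL (one_le_pow₀ (by nlinarith))

lemma clusterDiam_mono (hL : 0 ≤ L) (hδ : 1 ≤ δ) (hκ : 1 ≤ κ) : Monotone (clusterDiam L δ κ) :=
  fun _ _ hst ↦ mul_le_mul_of_nonneg_left (pow_le_pow_right₀ (by nlinarith) hst) hL

lemma stepInnerBound_nonneg (hL : 0 ≤ L) (hδ : 1 ≤ δ) (hκ : 1 ≤ κ) (t : ℕ) :
    0 ≤ stepInnerBound L δ κ t := by
  have := hL.trans (le_clusterDiam hL hδ hκ t)
  unfold stepInnerBound
  positivity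

lemma two_mul_mul_stepInnerBound_le (hL : 1 ≤ L) (hδ : 1 ≤ δ) (hκ : 1 ≤ κ) (t : ℕ) :
    2 * (κ * stepInnerBound L δ κ t) ≤ clusterDiam L δ κ (t + 1) := by
  have hD := le_clusterDiam (zero_le_one.trans hL) hδ hκ t
  have hsucc : clusterDiam L δ κ (t + 1) = 2 * (κ * (5 / 2 * (clusterDiam L δ κ t * δ ^ 2))) := by
    unfold clusterDiam
    ring
  rw [hsucc, stepInnerBound]
  set D := clusterDiam L δ κ t
  have hLδ : L ≤ D * δ ^ 2 := by nlinarith [one_le_pow₀ hδ (n := 2)]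
  have hδδ : δ ^ 2 ≤ D * δ ^ 2 := by nlinarith
  have hDδ : D * δ ≤ D * δ ^ 2 := by nlinarith
  gcongr
  linarith

lemma mul_stepInnerBound_lt_norm (hL : 1 ≤ L) (hδ : 1 ≤ δ) (hκ : 1 ≤ κ) {t N : ℕ}
    (hρ : clusterDiam L δ κ N ^ 2 < ρ ^ 2 - L) (ht : t < N) (hm : m ∈ Res ω ρ L ξ) :
    κ * stepInnerBound L δ κ t < ‖ξ + intComb ω m‖ := by
  have hL₀ := zero_le_one.trans hL
  have hpos : 0 ≤ κ * stepInnerBound L δ κ t :=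
    mul_nonneg (zero_le_one.trans hκ) (stepInnerBound_nonneg hL₀ hδ hκ t)
  calc κ * stepInnerBound L δ κ t ≤ 2 * (κ * stepInnerBound L δ κ t) := by linarith
    _ ≤ clusterDiam L δ κ (t + 1) := two_mul_mul_stepInnerBound_le hL hδ hκ t
    _ ≤ clusterDiam L δ κ N := clusterDiam_mono hL₀ hδ hκ ht
    _ < ‖ξ + intComb ω m‖ := lt_norm_of_mem_Res hρ hm

lemma ConjugateIn.confine (hδ : ∀ n, supAbs n < R → ‖intComb ω n‖ ≤ δ)
    (hA : L + δ ^ 2 / 2 + Δ * δ ≤ A)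
    (hΔ : ∀ b, ConjugateIn ω ρ L R ξ (nearlyOrthogonalSpan ω R A V (ξ + intComb ω m)) m b →
      ‖intComb ω (b - m)‖ ≤ Δ)
    (h : ConjugateIn ω ρ L R ξ V m b) :
    ConjugateIn ω ρ L R ξ (nearlyOrthogonalSpan ω R A V (ξ + intComb ω m)) m b := by
  induction h with
  | refl => exact .refl
  | @tail x y _ hxy ih =>
    obtain ⟨hx, hy, hR, hV⟩ := hxy
    refine ih.tail ⟨hx, hy, hR, Submodule.subset_span ⟨y - x, ⟨hR, hV, ?_⟩, rfl⟩⟩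
    have hstep := hδ _ hR
    have hbase : ξ + intComb ω m = ξ + intComb ω x - intComb ω (x - m) := by
      rw [intComb_sub]
      abel
    calc |inner ℝ (ξ + intComb ω m) (intComb ω (y - x))|
        ≤ |inner ℝ (ξ + intComb ω x) (intComb ω (y - x))| +
            |inner ℝ (intComb ω (x - m)) (intComb ω (y - x))| := by
          rw [hbase, inner_sub_left]
          exact abs_sub _ _
      _ ≤ (L + ‖intComb ω (y - x)‖ ^ 2 / 2) + ‖intComb ω (x - m)‖ * ‖intComb ω (y - x)‖ :=
          add_le_add (abs_inner_le_of_mem_Res hx hy) (abs_real_inner_le_norm _ _)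
      _ ≤ L + δ ^ 2 / 2 + Δ * δ := by
          gcongr
          · exact (norm_nonneg _).trans (hΔ x ih)
          · exact hΔ x ih
      _ ≤ A := hA

lemma norm_intComb_sub_le_of_nearlyOrthogonalSpan_eq (hκ : CoeffBound ω R κ) (hκ₀ : 0 ≤ κ)
    (hA : 0 ≤ A) (hd : Module.finrank ℝ V ≤ d)
    (hm : nearlyOrthogonalSpan ω R A V (ξ + intComb ω m) = V)
    (hb : nearlyOrthogonalSpan ω R A V (ξ + intComb ω b) = V) (hbm : intCast (b - m) ∈ V) :
    ‖intComb ω (b - m)‖ ≤ 2 * (κ * A) := by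
  have hinner_m := abs_inner_realComb_le hκ hA hm hd hbm
  have hinner_b := abs_inner_realComb_le hκ hA hb hd hbm
  rw [realComb_intCast] at hinner_m hinner_b
  set y := intComb ω (b - m) with hy
  have hsub : y = ξ + intComb ω b - (ξ + intComb ω m) := by
    rw [hy, intComb_sub]
    abel
  have hsq : ‖y‖ * ‖y‖ ≤ 2 * (κ * A) * ‖y‖ := by
    calc ‖y‖ * ‖y‖ = inner ℝ (ξ + intComb ω b) y - inner ℝ (ξ + intComb ω m) y := by
          rw [← inner_sub_left, ← hsub, real_inner_self_eq_norm_mul_norm]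
      _ ≤ κ * A * ‖y‖ + κ * A * ‖y‖ := by
          linarith [(abs_le.1 hinner_b).2, (abs_le.1 hinner_m).1]
      _ = 2 * (κ * A) * ‖y‖ := by ring
  rcases (norm_nonneg y).eq_or_lt with hy₀ | hy₀
  · exact hy₀ ▸ by positivity
  · exact le_of_mul_le_mul_right hsq hy₀

theorem ConjugateIn.norm_intComb_sub_le (hδ : ∀ n, supAbs n < R → ‖intComb ω n‖ ≤ δ)
    (hκ : CoeffBound ω R κ) (hL : 1 ≤ L) (hδ₁ : 1 ≤ δ) (hκ₁ : 1 ≤ κ)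
    (hρ : clusterDiam L δ κ l ^ 2 < ρ ^ 2 - L) {t : ℕ} (ht : Module.finrank ℝ V ≤ t)
    (hm : m ∈ Res ω ρ L ξ) (h : ConjugateIn ω ρ L R ξ V m b) :
    ‖intComb ω (b - m)‖ ≤ clusterDiam L δ κ t := by
  have hL₀ := zero_le_one.trans hL
  have hκ₀ := zero_le_one.trans hκ₁
  induction t generalizing V m b with
  | zero =>
    obtain rfl : V = ⊥ := Submodule.finrank_eq_zero.1 (Nat.le_zero.1 ht)
    rw [← realComb_intCast, (Submodule.mem_bot ℝ).1 h.intCast_sub_mem, map_zero, norm_zero]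
    exact hL₀.trans (le_clusterDiam hL₀ hδ₁ hκ₁ 0)
  | succ t ih =>
    set A := stepInnerBound L δ κ t
    have hA : 0 ≤ A := stepInnerBound_nonneg hL₀ hδ₁ hκ₁ t
    rcases ht.lt_or_eq with ht | ht
    · exact (ih (by lia) hm h).trans (clusterDiam_mono hL₀ hδ₁ hκ₁ t.le_succ)
    have bound_of_span_ne {m b : Fin l → ℤ} (hm : m ∈ Res ω ρ L ξ)
        (hspan : nearlyOrthogonalSpan ω R A V (ξ + intComb ω m) ≠ V)
        (h : ConjugateIn ω ρ L R ξ V m b) : ‖intComb ω (b - m)‖ ≤ clusterDiam L δ κ (t + 1) := by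
      have hlt : Module.finrank ℝ (nearlyOrthogonalSpan ω R A V (ξ + intComb ω m)) < t + 1 :=
        ht ▸ Submodule.finrank_lt_finrank_of_lt (nearlyOrthogonalSpan_le.lt_of_ne hspan)
      have hsmall (b) := ih (b := b) (Nat.le_of_lt_succ hlt) hm
      exact (hsmall b (h.confine hδ le_rfl hsmall)).trans
        (clusterDiam_mono hL₀ hδ₁ hκ₁ t.le_succ)
    by_cases hspan_m : nearlyOrthogonalSpan ω R A V (ξ + intComb ω m) = V
    swap; · exact bound_of_span_ne hm hspan_m h
    by_cases hspan_b : nearlyOrthogonalSpan ω R A V (ξ + intComb ω b) = V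
    swap
    · rw [intComb_sub, norm_sub_rev, ← intComb_sub]
      exact bound_of_span_ne (h.mem_Res hm) hspan_b h.symm
    have htl : t + 1 ≤ l := by simpa [ht] using V.finrank_le
    have hlarge : κ * A < ‖ξ + intComb ω m‖ :=
      mul_stepInnerBound_lt_norm hL hδ₁ hκ₁ hρ htl hm
    have hd := finrank_lt_of_nearlyOrthogonalSpan_eq hκ hκ₀ hA hlarge hspan_m
    exact (norm_intComb_sub_le_of_nearlyOrthogonalSpan_eq hκ hκ₀ hA hd.le hspan_m hspan_b
      h.intCast_sub_mem).trans (two_mul_mul_stepInnerBound_le hL hδ₁ hκ₁ t)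

lemma nearlyOrthogonalSpan_span_Ups (hδ : ∀ n, supAbs n < R → ‖intComb ω n‖ ≤ δ)
    (hκ : CoeffBound ω R κ) (hL : 1 ≤ L) (hδ₁ : 1 ≤ δ) (hκ₁ : 1 ≤ κ)
    (hρ : clusterDiam L δ κ l ^ 2 < ρ ^ 2 - L) (hξ : 0 ∈ Res ω ρ L ξ) :
    nearlyOrthogonalSpan ω R (stepInnerBound L δ κ (l - 1))
        (Submodule.span ℝ (intCast '' Ups ω ρ L R ξ)) (ξ + intComb ω 0) =
      Submodule.span ℝ (intCast '' Ups ω ρ L R ξ) := by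
  set V := Submodule.span ℝ (intCast '' Ups ω ρ L R ξ) with hV
  set A := stepInnerBound L δ κ (l - 1) with hA
  set W := nearlyOrthogonalSpan ω R A V (ξ + intComb ω 0)
  by_contra hne
  have hlt : Module.finrank ℝ W < Module.finrank ℝ V :=
    Submodule.finrank_lt_finrank_of_lt (nearlyOrthogonalSpan_le.lt_of_ne hne)
  have hVl : Module.finrank ℝ V ≤ l := V.finrank_le.trans_eq (by simp)
  have hsmall (b) (hb : ConjugateIn ω ρ L R ξ W 0 b) :=
    hb.norm_intComb_sub_le hδ hκ hL hδ₁ hκ₁ hρ (t := l - 1) (by lia) hξ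
  have hVW : V ≤ W := by
    rw [hV, Submodule.span_le]
    rintro _ ⟨m, hm, rfl⟩
    simpa using ((conjugateIn_of_mem_Ups hm).confine hδ hA.ge hsmall).intCast_sub_mem
  exact hne (nearlyOrthogonalSpan_le.antisymm hVW)

theorem finrank_span_Ups_lt (hδ : ∀ n, supAbs n < R → ‖intComb ω n‖ ≤ δ)
    (hκ : CoeffBound ω R κ) (hL : 1 ≤ L) (hδ₁ : 1 ≤ δ) (hκ₁ : 1 ≤ κ) (hl : 0 < l)
    (hρ : clusterDiam L δ κ l ^ 2 < ρ ^ 2 - L) (hξ : 0 ∈ Res ω ρ L ξ) :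
    Module.finrank ℝ (Submodule.span ℝ (intCast '' Ups ω ρ L R ξ)) < d :=
  finrank_lt_of_nearlyOrthogonalSpan_eq hκ (zero_le_one.trans hκ₁)
    (stepInnerBound_nonneg (zero_le_one.trans hL) hδ₁ hκ₁ (l - 1))
    (mul_stepInnerBound_lt_norm hL hδ₁ hκ₁ hρ (by lia) hξ)
    (nearlyOrthogonalSpan_span_Ups hδ hκ hL hδ₁ hκ₁ hρ hξ)

lemma exists_short_basis_span_Ups (hδ : ∀ n, supAbs n < R → ‖intComb ω n‖ ≤ δ)
    (hκ : CoeffBound ω R κ) (hL : 1 ≤ L) (hδ₁ : 1 ≤ δ) (hκ₁ : 1 ≤ κ)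
    (hρ : clusterDiam L δ κ l ^ 2 < ρ ^ 2 - L) (hξ : 0 ∈ Res ω ρ L ξ) :
    ∃ n : Fin (Module.finrank ℝ (Submodule.span ℝ (intCast '' Ups ω ρ L R ξ))) → Fin l → ℤ,
      (∀ j, supAbs (n j) ≤ R) ∧ (LinearIndependent ℝ fun j ↦ intCast (n j)) ∧
      Submodule.span ℝ (range fun j ↦ intCast (n j)) =
        Submodule.span ℝ (intCast '' Ups ω ρ L R ξ) := by
  obtain ⟨n, hn, hind, hspan⟩ := exists_basis_of_span_intCast_image_eq
    (nearlyOrthogonalSpan_span_Ups hδ hκ hL hδ₁ hκ₁ hρ hξ)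
  exact ⟨n, fun j ↦ (hn j).1.le, hind, hspan⟩

theorem norm_intComb_sub_le_of_mem_Ups (hδ : ∀ n, supAbs n < R → ‖intComb ω n‖ ≤ δ)
    (hκ : CoeffBound ω R κ) (hL : 1 ≤ L) (hδ₁ : 1 ≤ δ) (hκ₁ : 1 ≤ κ)
    (hρ : clusterDiam L δ κ l ^ 2 < ρ ^ 2 - L) (hξ : 0 ∈ Res ω ρ L ξ)
    (hm : m ∈ Ups ω ρ L R ξ) (hb : b ∈ Ups ω ρ L R ξ) :
    ‖intComb ω (b - m)‖ ≤
      clusterDiam L δ κ (Module.finrank ℝ (Submodule.span ℝ (intCast '' Ups ω ρ L R ξ))) :=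
  have hm := conjugateIn_of_mem_Ups hm
  ConjugateIn.norm_intComb_sub_le hδ hκ hL hδ₁ hκ₁ hρ le_rfl (hm.mem_Res hξ)
    (hm.symm.trans (conjugateIn_of_mem_Ups hb))

end Diameter

section Counting

variable {d l : ℕ} {ω : Fin l → EuclideanSpace ℝ (Fin d)} {B₀ μhat R D : ℝ}

lemma norm_intCast_le (n : Fin l → ℤ) : ‖intCast n‖ ≤ supAbs n :=
  (pi_norm_le_iff_of_nonneg (supAbs_nonneg n)).2 (abs_le_supAbs n)

lemma exists_le_abs_coeff_sub_of_ne {t : ℕ} {n : Fin t → Fin l → ℤ} (hn : ∀ j, supAbs (n j) ≤ R)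
    (hR : 0 < R) {p q : Fin l → ℤ} (hpq : p ≠ q) {a b : Fin t → ℝ}
    (ha : ∑ j, a j • intCast (n j) = intCast p) (hb : ∑ j, b j • intCast (n j) = intCast q) :
    ∃ j, ((t + 1) * R)⁻¹ ≤ |a j - b j| := by
  by_contra! hclose
  have hsub : intCast p - intCast q = ∑ j, (a j - b j) • intCast (n j) := by
    simp only [← ha, ← hb, sub_smul, Finset.sum_sub_distrib]
  have hlt : ‖intCast p - intCast q‖ < 1 := by
    calc ‖intCast p - intCast q‖ ≤ Fintype.card (Fin t) * (((t + 1) * R)⁻¹ * R) := by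
          rw [hsub]
          exact norm_sum_smul_le (by positivity) (fun j ↦ (hclose j).le)
            fun j ↦ (norm_intCast_le _).trans (hn j)
      _ = t / (t + 1) := by
          rw [Fintype.card_fin]
          field_simp
      _ < 1 := (div_lt_one (by positivity)).2 (lt_add_one _)
  exact hpq (eq_of_forall_abs_sub_lt_one fun k ↦
    (norm_le_pi_norm (intCast p - intCast q) k).trans_lt hlt)

lemma mul_le_of_mul_prod_sides_le {x y K s D : ℝ} {t e : ℕ} (hs : 0 < s) (hD : 0 < D)
    (h : x * (s⁻¹ ^ t * D ^ e) * y ≤ (K * D) ^ (t + e)) : x * y ≤ K ^ (t + e) * (s * D) ^ t := by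
  calc x * y = x * (s⁻¹ ^ t * D ^ e) * y * (s ^ t / D ^ e) := by
        rw [inv_pow]
        field_simp
    _ ≤ (K * D) ^ (t + e) * (s ^ t / D ^ e) := by gcongr
    _ = K ^ (t + e) * (s * D) ^ t := by
        rw [mul_pow K, pow_add D, mul_pow s]
        field_simp

/-- Side lengths of the boxes packed around the points counted in `card_mul_abs_det_le`: `r` in
the `t` directions in which the points are separated, `D` in the `e` transversal ones. -/
def boxSides (t e : ℕ) (r D : ℝ) : Fin (t + e) → ℝ := Fin.append (fun _ ↦ r) fun _ ↦ D

lemma prod_boxSides (t e : ℕ) (r D : ℝ) : ∏ i, boxSides t e r D i = r ^ t * D ^ e := by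
  simp [boxSides, Fin.prod_univ_add]

lemma boxSides_nonneg {t e : ℕ} {r D : ℝ} (hr : 0 ≤ r) (hD : 0 ≤ D) (i : Fin (t + e)) :
    0 ≤ boxSides t e r D i := by
  refine Fin.addCases (fun j ↦ ?_) (fun j ↦ ?_) i <;> simpa [boxSides]

lemma boxSides_mul_norm_intComb_append_le {t e : ℕ} (hω : ∀ j, ‖ω j‖ ≤ d) {r : ℝ}
    {n : Fin t → Fin l → ℤ} {w : Fin e → Fin l → ℤ} (hn : ∀ j, supAbs (n j) ≤ R)
    (hw : ∀ j, supAbs (w j) ≤ 1) (hr : 0 ≤ r) (hrR : r * R ≤ 1) (hD : 1 ≤ D) (i : Fin (t + e)) :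
    boxSides t e r D i * ‖intComb ω (Fin.append n w i)‖ ≤ l * d * D := by
  refine Fin.addCases (fun j ↦ ?_) (fun j ↦ ?_) i
  · simp only [boxSides, Fin.append_left]
    calc r * ‖intComb ω (n j)‖ ≤ r * (l * d * R) := by
          gcongr
          exact norm_intComb_le hω (hn j)
      _ = l * d * (r * R) := by ring
      _ ≤ l * d * D := by
          gcongr
          exact hrR.trans hD
  · simp only [boxSides, Fin.append_right]
    calc D * ‖intComb ω (w j)‖ ≤ D * (l * d * 1) := by
          gcongr
          exact norm_intComb_le hω (hw j)
      _ = l * d * D := by ring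

lemma card_mul_abs_det_le {t e : ℕ} {ω : Fin l → EuclideanSpace ℝ (Fin (t + e))}
    (hω : ∀ j, ‖ω j‖ ≤ (t + e : ℕ)) {n : Fin t → Fin l → ℤ} {w : Fin e → Fin l → ℤ}
    (hn : LinearIndependent ℝ fun j ↦ intCast (n j)) (hnR : ∀ j, supAbs (n j) ≤ R)
    (hw : ∀ j, supAbs (w j) ≤ 1) (hR : 0 < R) (hD : 1 ≤ D) {T : Finset (Fin l → ℤ)}
    (hT : ∀ p ∈ T, intCast p ∈ Submodule.span ℝ (range fun j ↦ intCast (n j)))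
    (hTD : ∀ p ∈ T, ‖intComb ω p‖ ≤ D) :
    T.card * |(EuclideanSpace.basisFun (Fin (t + e)) ℝ).toBasis.det
        fun j ↦ intComb ω (Fin.append n w j)| ≤
      (2 * (1 + l * (t + e : ℕ) ^ 2)) ^ (t + e) * ((t + 1) * R * D) ^ t := by
  set s : ℝ := (t + 1) * R with hs
  have hs₀ : 0 < s := by positivity
  have hsR : s⁻¹ * R ≤ 1 := by
    rw [inv_mul_le_one₀ hs₀]
    exact le_mul_of_one_le_left hR.le (by simp)
  obtain ⟨c, hc⟩ := exists_coords_of_linearIndependent hn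
  set v := fun j ↦ intComb ω (Fin.append n w j)
  set a : (Fin l → ℤ) → Fin (t + e) → ℝ := fun p ↦ Fin.append (c (intCast p)) 0
  have hsep : (T : Set (Fin l → ℤ)).Pairwise
      fun p q ↦ ∃ i, boxSides t e s⁻¹ D i ≤ |a p i - a q i| := by
    intro p hp q hq hpq
    obtain ⟨j, hj⟩ := exists_le_abs_coeff_sub_of_ne hnR hR hpq (hc _ (hT p hp)) (hc _ (hT q hq))
    exact ⟨Fin.castAdd e j, by simpa [boxSides, a, hs] using hj⟩
  have hcenter (p) (hp : p ∈ T) : ‖∑ i, a p i • v i‖ ≤ D := by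
    refine le_of_eq_of_le (congrArg _ ?_) (hTD p hp)
    rw [← realComb_intCast, ← hc _ (hT p hp)]
    simp [a, v, Fin.sum_univ_add, realComb_intCast]
  have hpack := card_mul_prod_mul_abs_basisDet_le v
    (boxSides_nonneg (inv_nonneg.2 hs₀.le) (by positivity)) (by positivity) hsep
    fun p hp x ↦ norm_sum_smul_le_of_mem_pi_Ico (hcenter p hp)
      (boxSides_mul_norm_intComb_append_le hω hnR hw (inv_nonneg.2 hs₀.le) hsR hD)
  rw [prod_boxSides, Fintype.card_fin] at hpack
  refine mul_le_of_mul_prod_sides_le hs₀ (by positivity) (hpack.trans_eq ?_)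
  ring

theorem SDC.card_le (h : SDC d l ω B₀ μhat) (hω : ∀ j, ‖ω j‖ ≤ d) (hd : 0 < d) (hl : d ≤ l)
    (hB₀ : 0 < B₀) (hμ : 0 ≤ μhat) (hR : 1 ≤ R) (hD : 1 ≤ D) {t : ℕ} (ht : t ≤ d)
    {n : Fin t → Fin l → ℤ} (hn : LinearIndependent ℝ fun j ↦ intCast (n j))
    (hnR : ∀ j, supAbs (n j) ≤ R) {T : Finset (Fin l → ℤ)}
    (hT : ∀ p ∈ T, intCast p ∈ Submodule.span ℝ (range fun j ↦ intCast (n j)))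
    (hTD : ∀ p ∈ T, ‖intComb ω p‖ ≤ D) :
    T.card ≤ (2 * (1 + l * d ^ 2)) ^ d * ((t + 1) * R * D) ^ t * (l * d * R) ^ μhat / B₀ := by
  obtain ⟨e, rfl⟩ := Nat.exists_eq_add_of_le ht
  obtain ⟨w, hw, hnw⟩ := exists_linearIndependent_append_short hn hl
  rw [le_div_iff₀ hB₀]
  calc T.card * B₀ ≤ T.card * ((l * (t + e : ℕ) * R) ^ μhat *
          |(EuclideanSpace.basisFun (Fin (t + e)) ℝ).toBasis.det
            fun j ↦ intComb ω (Fin.append n w j)|) := by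
        gcongr
        exact h.le_mul_abs_det hd hμ hnw (supAbs_append_le hnR fun j ↦ (hw j).trans hR)
    _ = T.card * |(EuclideanSpace.basisFun (Fin (t + e)) ℝ).toBasis.det
          fun j ↦ intComb ω (Fin.append n w j)| * (l * (t + e : ℕ) * R) ^ μhat := by ring
    _ ≤ _ := mul_le_mul_of_nonneg_right
        (card_mul_abs_det_le hω hn hnR hw (zero_lt_one.trans_le hR) hD hT hTD) (by positivity)

end Counting

section Constants

variable {d l : ℕ} {B₀ μhat R L : ℝ}

/-- The constant for which `clusterDiam L (l * d * R) (coeffConst d l B₀ μhat R) t` equals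
`L * (diamConst d l B₀ μhat * R ^ (μhat + d + 1)) ^ t`. -/
def diamConst (d l : ℕ) (B₀ μhat : ℝ) : ℝ := 5 * d * (l * d) ^ (μhat + d + 1) / B₀

/-- The constant of the cardinality bound: what remains of the bound of `SDC.card_le`, taken at
`D = clusterDiam L (l * d * R) (coeffConst d l B₀ μhat R) s` with `s ≤ d`, after the powers of `L`
and `R` are split off. -/
def countConst (d l : ℕ) (B₀ μhat : ℝ) : ℝ :=
  (2 * (1 + l * d ^ 2)) ^ d * (d + 1) ^ d * diamConst d l B₀ μhat ^ d ^ 2 * (l * d) ^ μhat / B₀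

lemma one_le_mul_of_pos_of_le (hd : 0 < d) (hl : d ≤ l) : (1 : ℝ) ≤ l * d :=
  mod_cast Nat.mul_pos (hd.trans_le hl) hd

lemma one_le_mul_mul_of_pos_of_le (hd : 0 < d) (hl : d ≤ l) (hR : 1 ≤ R) : 1 ≤ l * d * R :=
  one_le_mul_of_one_le_of_one_le (one_le_mul_of_pos_of_le hd hl) hR

lemma one_le_coeffConst (hd : 0 < d) (hl : d ≤ l) (hB₀ : 0 < B₀) (hB₁ : B₀ ≤ 1) (hμ : 0 ≤ μhat)
    (hR : 1 ≤ R) : 1 ≤ coeffConst d l B₀ μhat R := by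
  have hd₁ : (1 : ℝ) ≤ d := mod_cast hd
  have hpow : 1 ≤ (l * d * R) ^ (d - 1 + μhat) :=
    Real.one_le_rpow (one_le_mul_mul_of_pos_of_le hd hl hR) (by linarith)
  rw [coeffConst, one_le_div hB₀]
  exact hB₁.trans (one_le_mul_of_one_le_of_one_le hd₁ hpow)

lemma one_le_diamConst (hd : 0 < d) (hl : d ≤ l) (hB₀ : 0 < B₀) (hB₁ : B₀ ≤ 1) (hμ : 0 ≤ μhat) :
    1 ≤ diamConst d l B₀ μhat := by
  have hd₁ : (1 : ℝ) ≤ d := mod_cast hd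
  have hpow : 1 ≤ ((l * d : ℝ)) ^ (μhat + d + 1) :=
    Real.one_le_rpow (one_le_mul_of_pos_of_le hd hl) (by positivity)
  rw [diamConst, one_le_div hB₀]
  exact hB₁.trans (one_le_mul_of_one_le_of_one_le (by linarith) hpow)

lemma countConst_nonneg (hB₀ : 0 < B₀) : 0 ≤ countConst d l B₀ μhat := by
  unfold countConst diamConst
  positivity

lemma clusterDiam_coeffConst (hd : 0 < d) (hl : d ≤ l) (hR : 1 ≤ R) (L : ℝ) (t : ℕ) :
    clusterDiam L (l * d * R) (coeffConst d l B₀ μhat R) t =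
      L * diamConst d l B₀ μhat ^ t * R ^ (t * (μhat + d + 1)) := by
  have hR₀ := zero_le_one.trans hR
  have hpow : (l * d * R) ^ (d - 1 + μhat) * (l * d * R) ^ 2 =
      (l * d : ℝ) ^ (μhat + d + 1) * R ^ (μhat + d + 1) := by
    have hpos : 0 < l * d * R := zero_lt_one.trans_le (one_le_mul_mul_of_pos_of_le hd hl hR)
    rw [← Real.rpow_natCast, ← Real.rpow_add hpos, ← Real.mul_rpow (by positivity) hR₀]
    congr 1
    push_cast
    ring
  have hbase : 5 * coeffConst d l B₀ μhat R * (l * d * R) ^ 2 =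
      diamConst d l B₀ μhat * R ^ (μhat + d + 1) := by
    calc _ = 5 * d / B₀ * ((l * d * R) ^ (d - 1 + μhat) * (l * d * R) ^ 2) := by
          rw [coeffConst]; ring
      _ = _ := by rw [hpow, diamConst]; ring
  rw [clusterDiam, hbase, mul_pow, ← Real.rpow_mul_natCast hR₀, mul_comm (t : ℝ), mul_assoc]

lemma card_bound_le_countConst_mul (hd : 0 < d) (hl : d ≤ l) (hB₀ : 0 < B₀) (hB₁ : B₀ ≤ 1)
    (hμ : 0 ≤ μhat) (hR : 1 ≤ R) (hL : 0 ≤ L) {s : ℕ} (hs : s ≤ d) :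
    (2 * (1 + l * d ^ 2)) ^ d * ((s + 1) * R * (L * diamConst d l B₀ μhat ^ s *
        R ^ (s * (μhat + d + 1)))) ^ s * (l * d * R) ^ μhat / B₀ ≤
      countConst d l B₀ μhat * L ^ s * R ^ ((s ^ 2 + 1 : ℕ) * (μhat + d + 1)) := by
  have hR₀ := zero_lt_one.trans_le hR
  set μ := μhat + d + 1
  set K := diamConst d l B₀ μhat
  have hK : 1 ≤ K := one_le_diamConst hd hl hB₀ hB₁ hμ
  have hpowR : R ^ s * (R ^ (s * μ)) ^ s * R ^ μhat ≤ R ^ ((s ^ 2 + 1 : ℕ) * μ) := by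
    rw [← Real.rpow_mul_natCast hR₀.le, ← Real.rpow_natCast, ← Real.rpow_add hR₀,
      ← Real.rpow_add hR₀]
    refine Real.rpow_le_rpow_of_exponent_le hR ?_
    have : (s : ℝ) ≤ d := mod_cast hs
    push_cast
    nlinarith
  have hpowK : K ^ s ^ 2 ≤ K ^ d ^ 2 := by gcongr
  have hpows : ((s : ℝ) + 1) ^ s ≤ (d + 1) ^ d := by
    calc ((s : ℝ) + 1) ^ s ≤ (d + 1) ^ s := by gcongr
      _ ≤ (d + 1) ^ d := by gcongr; simp
  calc _ = (2 * (1 + l * d ^ 2)) ^ d * ((s : ℝ) + 1) ^ s * K ^ s ^ 2 * (l * d) ^ μhat / B₀ *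
          L ^ s * (R ^ s * (R ^ (s * μ)) ^ s * R ^ μhat) := by
        rw [Real.mul_rpow (by positivity) hR₀.le, mul_pow (((s : ℝ) + 1) * R),
          mul_pow ((s : ℝ) + 1), mul_pow (L * K ^ s), mul_pow L, ← pow_mul K, ← pow_two s]
        ring
    _ ≤ (2 * (1 + l * d ^ 2)) ^ d * (d + 1) ^ d * K ^ d ^ 2 * (l * d) ^ μhat / B₀ * L ^ s *
          R ^ ((s ^ 2 + 1 : ℕ) * μ) := by gcongr
    _ = _ := rfl

end Constants

section ClusterBounds

variable {d l : ℕ} {ω : Fin l → EuclideanSpace ℝ (Fin d)} {B₀ μhat ρ L R δ κ : ℝ}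
  {ξ : EuclideanSpace ℝ (Fin d)}

lemma clusterDiam_sq_lt (hd : 0 < d) (hl : d ≤ l) (hB₀ : 0 < B₀) (hB₁ : B₀ ≤ 1) (hμ : 0 ≤ μhat)
    (hL : 0 ≤ L) (hR : 1 ≤ R) {C : ℝ} (hC : diamConst d l B₀ μhat ^ l ≤ C)
    (hρ : L + (C * L * R ^ (l * (μhat + d + 1))) ^ 2 < ρ ^ 2) :
    clusterDiam L (l * d * R) (coeffConst d l B₀ μhat R) l ^ 2 < ρ ^ 2 - L := by
  have hK := one_le_diamConst hd hl hB₀ hB₁ hμ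
  have hle : (L * diamConst d l B₀ μhat ^ l * R ^ (l * (μhat + d + 1))) ^ 2 ≤
      (C * L * R ^ (l * (μhat + d + 1))) ^ 2 := by
    rw [mul_comm L]
    gcongr
  rw [clusterDiam_coeffConst hd hl hR]
  linarith

lemma diam_image_Ups_le (hδ : ∀ n, supAbs n < R → ‖intComb ω n‖ ≤ δ)
    (hκ : CoeffBound ω R κ) (hL : 1 ≤ L) (hδ₁ : 1 ≤ δ) (hκ₁ : 1 ≤ κ)
    (hρ : clusterDiam L δ κ l ^ 2 < ρ ^ 2 - L) (hξ : 0 ∈ Res ω ρ L ξ) :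
    diam ((fun m ↦ ξ + intComb ω m) '' Ups ω ρ L R ξ) ≤
      clusterDiam L δ κ (Module.finrank ℝ (Submodule.span ℝ (intCast '' Ups ω ρ L R ξ))) := by
  have hL₀ := zero_le_one.trans hL
  refine diam_le_of_forall_dist_le (hL₀.trans (le_clusterDiam hL₀ hδ₁ hκ₁ _)) ?_
  rintro _ ⟨b, hb, rfl⟩ _ ⟨m, hm, rfl⟩
  rw [dist_add_left, dist_eq_norm, ← intComb_sub]
  exact norm_intComb_sub_le_of_mem_Ups hδ hκ hL hδ₁ hκ₁ hρ hξ hm hb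

lemma zero_mem_Ups (hξ : 0 ∈ Res ω ρ L ξ) : 0 ∈ Ups ω ρ L R ξ :=
  ⟨0, 0, rfl, rfl, by simpa using hξ, by simp⟩

theorem SDC.finite_Ups_and_ncard_le (h : SDC d l ω B₀ μhat) (hω : ∀ j, ‖ω j‖ ≤ d) (hd : 0 < d)
    (hl : d ≤ l) (hB₀ : 0 < B₀) (hμ : 0 ≤ μhat) (hR : 1 ≤ R)
    (hδ : ∀ n, supAbs n < R → ‖intComb ω n‖ ≤ δ) (hκ : CoeffBound ω R κ) (hL : 1 ≤ L)
    (hδ₁ : 1 ≤ δ) (hκ₁ : 1 ≤ κ) (hρ : clusterDiam L δ κ l ^ 2 < ρ ^ 2 - L)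
    (hξ : 0 ∈ Res ω ρ L ξ) {s : ℕ}
    (hs : Module.finrank ℝ (Submodule.span ℝ (intCast '' Ups ω ρ L R ξ)) = s) :
    (Ups ω ρ L R ξ).Finite ∧ (Ups ω ρ L R ξ).ncard ≤ (2 * (1 + l * d ^ 2)) ^ d *
      ((s + 1) * R * clusterDiam L δ κ s) ^ s * (l * d * R) ^ μhat / B₀ := by
  subst hs
  obtain ⟨n, hnR, hn, hspan⟩ := exists_short_basis_span_Ups hδ hκ hL hδ₁ hκ₁ hρ hξ
  have hsd := (finrank_span_Ups_lt hδ hκ hL hδ₁ hκ₁ (hd.trans_le hl) hρ hξ).le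
  have hD (t) : 1 ≤ clusterDiam L δ κ t :=
    hL.trans (le_clusterDiam (zero_le_one.trans hL) hδ₁ hκ₁ t)
  refine finite_and_ncard_le_of_forall_finset_card_le fun T hT ↦
    h.card_le hω hd hl hB₀ hμ hR (hD _) hsd hn hnR (fun p hp ↦ ?_) fun p hp ↦ ?_
  · rw [hspan]
    exact Submodule.subset_span (mem_image_of_mem _ (hT hp))
  · simpa using
      norm_intComb_sub_le_of_mem_Ups hδ hκ hL hδ₁ hκ₁ hρ hξ (zero_mem_Ups hξ) (hT hp)

end ClusterBounds

/-- Under the SDC (with `B₀ ∈ (0,1]`, `μhat > 0`, `μ := μhat+d+1`)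
there is `C = C(d,l,μhat,B₀) ≥ 1` such that for all `ρ > 0`, `L, L̃ ≥ 1`, and
`ξ ∈ ℝ^d` with `|‖ξ‖² − ρ²| ≤ L`: if `ρ² > L + (C·L·L̃^{lμ})²` then
(i) `s := Rank Υ^ℤ_{L,L̃}(ξ) < d`; (ii) `diam Υ_{L,L̃}(ξ) ≤ C·L·L̃^{sμ}`;
(iii) `#Υ^ℤ_{L,L̃}(ξ) ≤ C·L^s·L̃^{(s²+1)μ}`. -/
theorem cluster_rank_lt (d l : ℕ) (hd : 2 ≤ d) (hl : d < l)
    (B₀ μhat : ℝ) (hB₀ : 0 < B₀) (hB₁ : B₀ ≤ 1) (hμ : 0 < μhat) :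
    ∃ C : ℝ, 1 ≤ C ∧
      ∀ ω : Fin l → EuclideanSpace ℝ (Fin d),
        (∀ j i, ω j i ∈ Set.Icc (-(1 : ℝ)/2) (1/2)) →
        SDC d l ω B₀ μhat →
        ∀ (ρ L Ltilde : ℝ) (ξ : EuclideanSpace ℝ (Fin d)),
          0 < ρ → 1 ≤ L → 1 ≤ Ltilde →
          |‖ξ‖ ^ 2 - ρ ^ 2| ≤ L →
          L + (C * L * Ltilde ^ ((l : ℝ) * (μhat + d + 1))) ^ 2 < ρ ^ 2 →
          ∀ s : ℕ,
            s = Module.finrank ℝ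
                  (Submodule.span ℝ (intCast '' Ups ω ρ L Ltilde ξ)) →
            s < d ∧
            Metric.diam ((fun m => ξ + intComb ω m) '' Ups ω ρ L Ltilde ξ) ≤
              C * L * Ltilde ^ ((s : ℝ) * (μhat + d + 1)) ∧
            (Ups ω ρ L Ltilde ξ).Finite ∧
            ((Ups ω ρ L Ltilde ξ).ncard : ℝ) ≤
              C * L ^ s * Ltilde ^ (((s ^ 2 + 1 : ℕ) : ℝ) * (μhat + d + 1)) := by
  have hd₀ : 0 < d := by lia
  set K := diamConst d l B₀ μhat
  have hK : 1 ≤ K := one_le_diamConst hd₀ hl.le hB₀ hB₁ hμ.le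
  have hKl : 1 ≤ K ^ l := one_le_pow₀ hK
  have hcount : 0 ≤ countConst d l B₀ μhat := countConst_nonneg hB₀
  refine ⟨K ^ l + countConst d l B₀ μhat, by linarith, ?_⟩
  intro ω hω hSDC ρ L R ξ _ hL hR hξ hρ s hs
  have hω' (j) : ‖ω j‖ ≤ d := norm_le_of_forall_mem_Icc (hω j)
  have hδ (n) (hn : supAbs n < R) : ‖intComb ω n‖ ≤ l * d * R := norm_intComb_le hω' hn.le
  have hκ := hSDC.coeffBound hω' hd₀ hl.le hB₀ hμ.le hR
  have hδ₁ := one_le_mul_mul_of_pos_of_le hd₀ hl.le hR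
  have hκ₁ := one_le_coeffConst hd₀ hl.le hB₀ hB₁ hμ.le hR
  have hξ₀ : 0 ∈ Res ω ρ L ξ := by simpa [Res, intComb_zero] using hξ
  have hρ' := clusterDiam_sq_lt hd₀ hl.le hB₀ hB₁ hμ.le (by linarith) hR (by linarith) hρ
  have hsd : s < d := hs ▸ finrank_span_Ups_lt hδ hκ hL hδ₁ hκ₁ (hd₀.trans hl) hρ' hξ₀
  have hdiam := diam_image_Ups_le hδ hκ hL hδ₁ hκ₁ hρ' hξ₀
  obtain ⟨hfin, hcard⟩ :=
    hSDC.finite_Ups_and_ncard_le hω' hd₀ hl.le hB₀ hμ.le hR hδ hκ hL hδ₁ hκ₁ hρ' hξ₀ hs.symm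
  rw [← hs, clusterDiam_coeffConst hd₀ hl.le hR, mul_comm L] at hdiam
  rw [clusterDiam_coeffConst hd₀ hl.le hR] at hcard
  have hKs : K ^ s ≤ K ^ l := pow_le_pow_right₀ hK (hsd.trans hl).le
  have hcount_le := card_bound_le_countConst_mul hd₀ hl.le hB₀ hB₁ hμ.le hR (L := L)
    (by linarith) hsd.le
  exact ⟨hsd, hdiam.trans (by gcongr; linarith), hfin,
    (hcard.trans hcount_le).trans (by gcongr; linarith)⟩

end
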